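/- Let α ∈ (0,1), p > 1 real, c > 0, and let φ be an even, nontrivial steady solution with speed c (for either nonlinearity, case abs or case sgn) that is monotonically increasing on (−π, 0) and satisfies n′(φ(x)) ≤ c for every x ∈ ℝ. Then there exist δ > 0 and λ > 0 such that μ − φ(x) ≥ λ·|x|^α for every x with |x| ≤ δ, where μ = (c/p)^(1/(p−1)). -/

import Mathlib

open Real MeasureTheory Set Filter Topology

/-- The periodic convolution kernel `K_α`: equal to the explicit integral
representation for `x ∉ 2πℤ` and to `0` on `2πℤ`. -/
noncomputable def Kker (α x : ℝ) : ℝ :=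
  letI : Decidable (∃ k : ℤ, x = 2 * π * k) := Classical.propDecidable _
  if ∃ k : ℤ, x = 2 * π * k then 0
  else (1 / (π * Real.Gamma α)) *
    ∫ t in Set.Ioi (0:ℝ),
      t ^ (α - 1) * (Real.exp t * Real.cos x - 1) /
        (1 - 2 * Real.exp t * Real.cos x + Real.exp (2 * t))

/-- A steady travelling-wave solution of speed `c` with nonlinearity `n`:
a continuous, `2π`-periodic, zero-mean function `φ` satisfying the steady
convolution equation. -/
def IsSteadySolution (α c : ℝ) (n φ : ℝ → ℝ) : Prop :=
  Continuous φ ∧ Function.Periodic φ (2 * π) ∧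
  (∫ y in (-π)..π, φ y) = 0 ∧
  ∀ x : ℝ, (∫ y in (-π)..π, Kker α (x - y) * φ y) =
    c * φ x - n (φ x) + (1 / (2 * π)) * ∫ y in (-π)..π, n (φ y)

/-- Case abs nonlinearity `n(x) = |x|^p`. -/
noncomputable def nAbs (p x : ℝ) : ℝ := |x| ^ p
/-- Case sgn nonlinearity `n(x) = x·|x|^(p-1)`. -/
noncomputable def nSgn (p x : ℝ) : ℝ := x * |x| ^ (p - 1)
/-- Derivative of the case abs nonlinearity, `n′(x) = p·x·|x|^(p-2)`. -/
noncomputable def nAbs' (p x : ℝ) : ℝ := p * x * |x| ^ (p - 2)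
/-- Derivative of the case sgn nonlinearity, `n′(x) = p·|x|^(p-1)`. -/
noncomputable def nSgn' (p x : ℝ) : ℝ := p * |x| ^ (p - 1)

/-! The kernel `K_α` is a strictly increasing function of the cosine and `φ` is a nondecreasing one,
so the product of their `2h`-differences is nonnegative. Its integral over a period is
`2 ((K_α * φ)(0) - (K_α * φ)(2h))`, which the steady equation rewrites in terms of `φ 0` and
`φ (2h)` alone. If `φ 0 = μ`, then `n' (φ 0) = c` and the linear terms cancel, leaving at most
`C (μ - φ (2h)) ^ 2`. On the other hand `K_α (2h) - K_α (3h)` is at least of order `h ^ (α - 1)`, so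
the integral is at least of order `h ^ α (φ (2h) - φ (3h))`. Hence `u = μ - φ` satisfies
`κ x ^ α (u (3x/2) - u x) ≤ (u x) ^ 2`, and a bound `lam x ^ α ≤ u x` propagates from `3x/2` to `x`.
-/

/-! ### Functions of the cosine and kernels on the circle -/

/-- `f` is a nondecreasing function of the cosine. This encodes "even, `2π`-periodic and
nonincreasing on `[0, π]`" in a single inequality. -/
def CosMonotone (f : ℝ → ℝ) : Prop := ∀ ⦃x y⦄, cos x ≤ cos y → f x ≤ f y

/-- An even, `2π`-periodic, integrable convolution kernel that is strictly increasing as a function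
of the cosine off `2πℤ`. Nothing is assumed about its values on `2πℤ`, where it may be singular. -/
structure IsUnimodalKernel (K : ℝ → ℝ) : Prop where
  even : Function.Even K
  periodic : Function.Periodic K (2 * π)
  intervalIntegrable : ∀ a b, IntervalIntegrable K volume a b
  lt_of_cos_lt : ∀ ⦃x y⦄, cos x < cos y → cos y ≠ 1 → K x < K y

/-- The convolution `(K * f)(x)` over one period. -/
noncomputable def circleConv (K f : ℝ → ℝ) (x : ℝ) : ℝ := ∫ y in (-π)..π, K (x - y) * f y

/-- The integral over one period of the product of the `2h`-differences of `K` and `f`. It measures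
how far `K * f` falls from its value at `0` to its value at `2h`. -/
noncomputable def differenceForm (K f : ℝ → ℝ) (h : ℝ) : ℝ :=
  ∫ y in (-π)..π, (K (y - h) - K (y + h)) * (f (y - h) - f (y + h))

lemma cos_lt_one_of_mem_Ioc {x : ℝ} (hx : x ∈ Ioc 0 π) : cos x < 1 := by
  simpa only [cos_zero] using cos_lt_cos_of_nonneg_of_le_pi le_rfl hx.2 hx.1

lemma ae_cos_add_ne_one (h : ℝ) : ∀ᵐ y : ℝ, cos (y + h) ≠ 1 := by
  have hcount : {y : ℝ | cos (y + h) = 1}.Countable :=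
    (countable_range fun k : ℤ ↦ k * (2 * π) - h).mono fun y hy ↦
      (cos_eq_one_iff _).1 hy |>.imp fun k hk ↦ by simp only [hk, add_sub_cancel_right]
  exact hcount.ae_notMem volume

lemma apply_eq_of_cos_eq {f : ℝ → ℝ} (heven : Function.Even f) (hper : Function.Periodic f (2 * π))
    {x y : ℝ} (h : cos x = cos y) : f x = f y := by
  obtain ⟨k, rfl | rfl⟩ := cos_eq_cos_iff.1 h
  · rw [show 2 * (k : ℝ) * π + x = x + k * (2 * π) by ring, hper.int_mul k x]
  · rw [show 2 * (k : ℝ) * π - x = -x + k * (2 * π) by ring, hper.int_mul k (-x), heven]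

lemma monotoneOn_Icc_of_monotoneOn_Ioo {f : ℝ → ℝ} {a b : ℝ} (hab : a < b)
    (hcont : ContinuousOn f (Icc a b)) (hmono : MonotoneOn f (Ioo a b)) :
    MonotoneOn f (Icc a b) := by
  have hIoc : MonotoneOn f (Ioc a b) := by
    rw [← Ioo_insert_right hab]
    refine hmono.insert_of_continuousWithinAt ?_
      ((hcont b (right_mem_Icc.2 hab.le)).mono Ioo_subset_Icc_self)
    exact mem_closure_iff_clusterPt.1 (closure_Ioo hab.ne ▸ right_mem_Icc.2 hab.le)
  rw [← Ioc_insert_left hab.le]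
  refine hIoc.insert_of_continuousWithinAt ?_
    ((hcont a (left_mem_Icc.2 hab.le)).mono Ioc_subset_Icc_self)
  exact mem_closure_iff_clusterPt.1 (closure_Ioc hab.ne ▸ left_mem_Icc.2 hab.le)

namespace CosMonotone

variable {f : ℝ → ℝ}

lemma eq_of_cos_eq (hf : CosMonotone f) {x y : ℝ} (h : cos x = cos y) : f x = f y :=
  le_antisymm (hf h.le) (hf h.ge)

lemma even (hf : CosMonotone f) : Function.Even f := fun x ↦ hf.eq_of_cos_eq (cos_neg x)

lemma periodic (hf : CosMonotone f) : Function.Periodic f (2 * π) :=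
  fun x ↦ hf.eq_of_cos_eq (cos_add_two_pi x)

lemma le_apply_zero (hf : CosMonotone f) (x : ℝ) : f x ≤ f 0 :=
  hf (by simpa only [cos_zero] using cos_le_one x)

lemma antitoneOn (hf : CosMonotone f) : AntitoneOn f (Icc 0 π) :=
  fun _ hx _ hy hxy ↦ hf (cos_le_cos_of_nonneg_of_le_pi hx.1 hy.2 hxy)

lemma of_monotoneOn (hcont : Continuous f) (heven : Function.Even f)
    (hper : Function.Periodic f (2 * π)) (hmono : MonotoneOn f (Ioo (-π) 0)) : CosMonotone f := by
  have hIcc : MonotoneOn f (Icc (-π) 0) :=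
    monotoneOn_Icc_of_monotoneOn_Ioo (neg_lt_zero.2 pi_pos) hcont.continuousOn hmono
  have hreduce : ∀ x, f x = f (-arccos (cos x)) := fun x ↦
    apply_eq_of_cos_eq heven hper
      (by rw [cos_neg, cos_arccos (neg_one_le_cos x) (cos_le_one x)])
  have hmem : ∀ x, -arccos (cos x) ∈ Icc (-π) 0 := fun x ↦
    ⟨neg_le_neg (arccos_le_pi _), neg_nonpos.2 (arccos_nonneg _)⟩
  intro x y hxy
  rw [hreduce x, hreduce y]
  exact hIcc (hmem x) (hmem y) (neg_le_neg (arccos_le_arccos hxy))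

lemma eq_apply_zero_of_periodic (hf : CosMonotone f) {T : ℝ} (hT : T ∈ Ioc 0 π)
    (hper : Function.Periodic f T) (x : ℝ) : f x = f 0 := by
  obtain ⟨z, hz, hxz⟩ := hper.exists_mem_Ico₀ hT.1 x
  refine (hf.le_apply_zero x).antisymm ?_
  calc f 0 = f T := by rw [← zero_add T, hper]
    _ ≤ f z := hf.antitoneOn ⟨hz.1, hz.2.le.trans hT.2⟩ ⟨hT.1.le, hT.2⟩ hz.2.le
    _ = f x := hxz.symm

end CosMonotone

/-! ### The difference form of a convolution -/

lemma integral_comp_add_right_of_periodic {f : ℝ → ℝ} (hf : Function.Periodic f (2 * π)) (h : ℝ) :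
    ∫ y in (-π)..π, f (y + h) = ∫ y in (-π)..π, f y := by
  have hshift := hf.intervalIntegral_add_eq (-π + h) (-π)
  rw [intervalIntegral.integral_comp_add_right]
  convert hshift using 2 <;> ring

lemma integral_mul_comp_add {K f : ℝ → ℝ} (hK : Function.Even K)
    (hKper : Function.Periodic K (2 * π)) (hfper : Function.Periodic f (2 * π)) (a b : ℝ) :
    ∫ y in (-π)..π, K (y + a) * f (y + b) = circleConv K f (b - a) := by
  have hper : Function.Periodic (fun y ↦ K (b - a - y) * f y) (2 * π) := fun y ↦ by
    simp only [← sub_sub, hKper.sub_eq, hfper y]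
  rw [circleConv, ← integral_comp_add_right_of_periodic hper b]
  congr 1 with y
  rw [← hK (y + a)]
  ring_nf

lemma circleConv_even {K f : ℝ → ℝ} (hK : Function.Even K) (hf : Function.Even f) :
    Function.Even (circleConv K f) := by
  intro x
  rw [circleConv, circleConv, ← neg_neg π, ← intervalIntegral.integral_comp_neg, neg_neg]
  congr 1 with y
  rw [hf y, ← hK (-x - -y)]
  ring_nf

namespace IsUnimodalKernel

variable {K f : ℝ → ℝ} {h : ℝ}

lemma intervalIntegrable_mul_comp_add (hK : IsUnimodalKernel K) (hf : Continuous f) (a b : ℝ) :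
    IntervalIntegrable (fun y ↦ K (y + a) * f (y + b)) volume (-π) π := by
  have hKa : IntervalIntegrable (fun y ↦ K (y + a)) volume (-π) π := by
    simpa only [add_sub_cancel_right] using
      (hK.intervalIntegrable (-π + a) (π + a)).comp_add_right a
  exact hKa.mul_continuousOn (by fun_prop)

lemma intervalIntegrable_differenceForm (hK : IsUnimodalKernel K) (hf : Continuous f) (h : ℝ) :
    IntervalIntegrable (fun y ↦ (K (y - h) - K (y + h)) * (f (y - h) - f (y + h)))
      volume (-π) π := by
  have hint := hK.intervalIntegrable_mul_comp_add hf
  refine (((hint (-h) (-h)).add (hint h h)).sub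
    ((hint (-h) h).add (hint h (-h)))).congr fun y _ ↦ ?_
  simp only [← sub_eq_add_neg]
  ring

theorem differenceForm_eq (hK : IsUnimodalKernel K) (hf : Continuous f) (heven : Function.Even f)
    (hper : Function.Periodic f (2 * π)) (h : ℝ) :
    differenceForm K f h = 2 * (circleConv K f 0 - circleConv K f (2 * h)) := by
  have hint := hK.intervalIntegrable_mul_comp_add hf
  have hconv := integral_mul_comp_add hK.even hK.periodic hper
  have hexpand : ∀ y, (K (y - h) - K (y + h)) * (f (y - h) - f (y + h)) =
      (K (y + -h) * f (y + -h) + K (y + h) * f (y + h)) -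
        (K (y + -h) * f (y + h) + K (y + h) * f (y + -h)) := fun y ↦ by
    simp only [← sub_eq_add_neg]
    ring
  simp only [differenceForm, hexpand]
  rw [intervalIntegral.integral_sub ((hint _ _).add (hint _ _)) ((hint _ _).add (hint _ _)),
    intervalIntegral.integral_add (hint _ _) (hint _ _),
    intervalIntegral.integral_add (hint _ _) (hint _ _), hconv, hconv, hconv, hconv,
    show -h - h = -(2 * h) by ring, circleConv_even hK.even heven]
  ring_nf

lemma le_of_cos_le (hK : IsUnimodalKernel K) {x y : ℝ} (h : cos x ≤ cos y) (hy : cos y ≠ 1) :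
    K x ≤ K y :=
  h.lt_or_eq.elim (fun hlt ↦ (hK.lt_of_cos_lt hlt hy).le)
    fun heq ↦ (apply_eq_of_cos_eq hK.even hK.periodic heq).le

lemma sub_mul_sub_nonneg (hK : IsUnimodalKernel K) (hf : CosMonotone f) {x y : ℝ}
    (hx : cos x ≠ 1) (hy : cos y ≠ 1) : 0 ≤ (K x - K y) * (f x - f y) := by
  rcases le_total (cos x) (cos y) with h | h
  · exact mul_nonneg_of_nonpos_of_nonpos (sub_nonpos.2 (hK.le_of_cos_le h hy)) (sub_nonpos.2 (hf h))
  · exact mul_nonneg (sub_nonneg.2 (hK.le_of_cos_le h hx)) (sub_nonneg.2 (hf h))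

lemma eq_of_sub_mul_sub_eq_zero (hK : IsUnimodalKernel K) (hf : CosMonotone f) {x y : ℝ}
    (hx : cos x ≠ 1) (hy : cos y ≠ 1) (h : (K x - K y) * (f x - f y) = 0) : f x = f y := by
  rcases mul_eq_zero.1 h with hKxy | hfxy
  · rcases lt_trichotomy (cos x) (cos y) with hlt | heq | hgt
    · exact absurd (sub_eq_zero.1 hKxy) (hK.lt_of_cos_lt hlt hy).ne
    · exact hf.eq_of_cos_eq heq
    · exact absurd (sub_eq_zero.1 hKxy) (hK.lt_of_cos_lt hgt hx).ne'
  · exact sub_eq_zero.1 hfxy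

lemma ae_differenceForm_nonneg (hK : IsUnimodalKernel K) (hf : CosMonotone f) (h : ℝ) :
    ∀ᵐ y : ℝ, 0 ≤ (K (y - h) - K (y + h)) * (f (y - h) - f (y + h)) := by
  filter_upwards [ae_cos_add_ne_one (-h), ae_cos_add_ne_one h] with y hsub hadd
  exact hK.sub_mul_sub_nonneg hf hsub hadd

lemma periodic_of_differenceForm_nonpos (hK : IsUnimodalKernel K) (hf : CosMonotone f)
    (hcont : Continuous f) (h0 : differenceForm K f h ≤ 0) : Function.Periodic f (2 * h) := by
  have hle : -π ≤ π := neg_le_self pi_pos.le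
  have hnonneg := hK.ae_differenceForm_nonneg hf h
  have hzero := (intervalIntegral.integral_eq_zero_iff_of_le_of_nonneg_ae hle
    (ae_restrict_of_ae hnonneg) (hK.intervalIntegrable_differenceForm hcont h)).1
    (h0.antisymm (intervalIntegral.integral_nonneg_of_ae hle hnonneg))
  have hae : (fun y ↦ f (y - h)) =ᵐ[volume.restrict (Icc (-π) π)] fun y ↦ f (y + h) := by
    rw [← restrict_Ioc_eq_restrict_Icc]
    filter_upwards [hzero, ae_restrict_of_ae (ae_cos_add_ne_one (-h)),
      ae_restrict_of_ae (ae_cos_add_ne_one h)] with y hy hsub hadd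
    exact hK.eq_of_sub_mul_sub_eq_zero hf hsub hadd hy
  have heq : EqOn (fun y ↦ f (y - h)) (fun y ↦ f (y + h)) (Icc (-π) π) :=
    Measure.eqOn_Icc_of_ae_eq volume (neg_lt_self pi_pos).ne hae (by fun_prop) (by fun_prop)
  have hper : Function.Periodic (fun y ↦ f (y - h) - f (y + h)) (2 * π) :=
    (hf.periodic.sub_const h).sub (hf.periodic.add_const h)
  intro x
  obtain ⟨z, hz, hxz⟩ := hper.exists_mem_Ico two_pi_pos (x + h) (-π)
  have hdiff : f (x + h - h) - f (x + h + h) = 0 :=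
    hxz.trans (sub_eq_zero.2 (heq ⟨hz.1, by linarith [hz.2]⟩))
  rw [add_sub_cancel_right, add_assoc, ← two_mul] at hdiff
  exact (sub_eq_zero.1 hdiff).symm

theorem differenceForm_pos (hK : IsUnimodalKernel K) (hf : CosMonotone f) (hcont : Continuous f)
    (hne : ∃ x, f x ≠ f 0) (hh : 2 * h ∈ Ioc 0 π) : 0 < differenceForm K f h := by
  by_contra! h0
  obtain ⟨x, hx⟩ := hne
  exact hx (hf.eq_apply_zero_of_periodic hh
    (hK.periodic_of_differenceForm_nonpos hf hcont h0) x)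

/-- Only the window `[2h, 3h]` is kept: there `y - h ∈ [h, 2h]` and `y + h ∈ [3h, 4h]`, so both
differences are at least those between `2h` and `3h`. -/
theorem mul_sub_mul_sub_le_differenceForm (hK : IsUnimodalKernel K) (hf : CosMonotone f)
    (hcont : Continuous f) (hh : 0 < h) (hhπ : 4 * h ≤ π) :
    h * ((K (2 * h) - K (3 * h)) * (f (2 * h) - f (3 * h))) ≤ differenceForm K f h := by
  have hint := hK.intervalIntegrable_differenceForm hcont h
  have hcos : ∀ {a b}, h ≤ a → a ≤ b → b ≤ 4 * h → cos b ≤ cos a := fun ha hab hb ↦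
    cos_le_cos_of_nonneg_of_le_pi (hh.le.trans ha) (hb.trans hhπ) hab
  have hcos_ne : ∀ {a}, h ≤ a → a ≤ 4 * h → cos a ≠ 1 := fun ha ha' ↦
    (cos_lt_one_of_mem_Ioc ⟨hh.trans_le ha, ha'.trans hhπ⟩).ne
  calc h * ((K (2 * h) - K (3 * h)) * (f (2 * h) - f (3 * h)))
      = ∫ _ in (2 * h)..(3 * h), (K (2 * h) - K (3 * h)) * (f (2 * h) - f (3 * h)) := by
        rw [intervalIntegral.integral_const, smul_eq_mul]
        ring
    _ ≤ ∫ y in (2 * h)..(3 * h), (K (y - h) - K (y + h)) * (f (y - h) - f (y + h)) := by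
        refine intervalIntegral.integral_mono_on (by linarith)
          intervalIntegrable_const (hint.mono_set ?_) fun y hy ↦ ?_
        · rw [uIcc_of_le (by linarith), uIcc_of_le (by linarith)]
          exact Icc_subset_Icc (by linarith) (by linarith)
        · obtain ⟨hy₁, hy₂⟩ := hy
          have hnear : cos (2 * h) ≤ cos (y - h) := hcos (by linarith) (by linarith) (by linarith)
          have hfar : cos (y + h) ≤ cos (3 * h) := hcos (by linarith) (by linarith) (by linarith)
          have hmid : cos (3 * h) ≤ cos (2 * h) := hcos (by linarith) (by linarith) (by linarith)
          have hK₂₃ := hK.le_of_cos_le hmid (hcos_ne (by linarith) (by linarith))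
          have hKnear := hK.le_of_cos_le hnear (hcos_ne (by linarith) (by linarith))
          have hKfar := hK.le_of_cos_le hfar (hcos_ne (by linarith) (by linarith))
          exact mul_le_mul (sub_le_sub hKnear hKfar) (sub_le_sub (hf hnear) (hf hfar))
            (sub_nonneg.2 (hf hmid)) (by linarith)
    _ ≤ differenceForm K f h :=
        intervalIntegral.integral_mono_interval (by linarith) (by linarith) (by linarith)
          (ae_restrict_of_ae (hK.ae_differenceForm_nonneg hf h)) hint

end IsUnimodalKernel

/-! ### The kernel `K_α` -/

/-- The integrand of `K_α(x)` at `s = cos x`, without the weight `t ^ (α - 1)`. Numerator and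
denominator have been multiplied by `exp (-t)`, so that the denominator is `cosh t - s`. -/
noncomputable def kernelIntegrand (s t : ℝ) : ℝ := (s - exp (-t)) / (2 * (cosh t - s))

/-- The function of `s = cos x` that agrees with `K_α(x)` off `2πℤ`. -/
noncomputable def kernelProfile (α s : ℝ) : ℝ :=
  1 / (π * Real.Gamma α) * ∫ t in Ioi 0, t ^ (α - 1) * kernelIntegrand s t

lemma kernelIntegrand_eq (s t : ℝ) :
    (exp t * s - 1) / (1 - 2 * exp t * s + exp (2 * t)) = kernelIntegrand s t := by
  have hnum : exp t * s - 1 = exp t * (s - exp (-t)) := by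
    rw [mul_sub, ← exp_add, add_neg_cancel, exp_zero]
  have hden : 1 - 2 * exp t * s + exp (2 * t) = exp t * (2 * (cosh t - s)) := by
    have hexp : exp t * exp (-t) = 1 := by rw [← exp_add, add_neg_cancel, exp_zero]
    rw [cosh_eq, two_mul t, exp_add]
    linear_combination -hexp
  rw [hnum, hden, mul_div_mul_left _ _ (exp_ne_zero t), kernelIntegrand]

lemma Kker_of_cos_ne_one {α x : ℝ} (hx : cos x ≠ 1) : Kker α x = kernelProfile α (cos x) := by
  have hmem : ¬∃ k : ℤ, x = 2 * π * k := by
    rintro ⟨k, rfl⟩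
    exact hx (by rw [mul_comm, cos_int_mul_two_pi])
  simp only [Kker, if_neg hmem, kernelProfile, mul_div_assoc, kernelIntegrand_eq]

lemma Kker_of_cos_eq_one {α x : ℝ} (hx : cos x = 1) : Kker α x = 0 := by
  obtain ⟨k, rfl⟩ := (cos_eq_one_iff x).1 hx
  exact if_pos ⟨k, mul_comm _ _⟩

lemma Kker_eq_of_cos_eq (α : ℝ) {x y : ℝ} (h : cos x = cos y) : Kker α x = Kker α y := by
  by_cases hy : cos y = 1
  · rw [Kker_of_cos_eq_one hy, Kker_of_cos_eq_one (h.trans hy)]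
  · rw [Kker_of_cos_ne_one hy, Kker_of_cos_ne_one (h ▸ hy), h]

section Profile

variable {α ε s s₁ s₂ t : ℝ}

lemma cosh_sub_pos (hs : s < 1) (t : ℝ) : 0 < cosh t - s :=
  sub_pos.2 (hs.trans_le (one_le_cosh t))

lemma kernelIntegrand_sub (hs₁ : s₁ < 1) (hs₂ : s₂ < 1) (t : ℝ) :
    kernelIntegrand s₁ t - kernelIntegrand s₂ t =
      sinh t * (s₁ - s₂) / (2 * (cosh t - s₁) * (cosh t - s₂)) := by
  have h₁ := (cosh_sub_pos hs₁ t).ne'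
  have h₂ := (cosh_sub_pos hs₂ t).ne'
  rw [kernelIntegrand, kernelIntegrand, ← cosh_sub_sinh]
  field_simp
  ring

lemma one_sub_div_cosh_sub_le (hs : s ∈ Ico (-1) 1) (ht : 0 ≤ t) :
    (1 - s) / (2 * (cosh t - s)) ≤ 2 * exp (-t / 2) := by
  have hcosh : exp t / 2 ≤ cosh t := by
    rw [cosh_eq]
    linarith [exp_pos (-t)]
  calc (1 - s) / (2 * (cosh t - s))
      ≤ 1 / (cosh t + 1) := by
        have := cosh_sub_pos hs.2 t
        have := cosh_pos t
        rw [div_le_div_iff₀ (by positivity) (by positivity)]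
        nlinarith [mul_nonneg (sub_nonneg.2 (one_le_cosh t)) (neg_le_iff_add_nonneg'.1 hs.1)]
    _ ≤ 1 / (exp t / 2) := by gcongr; linarith
    _ = 2 * exp (-t) := by rw [exp_neg]; field_simp
    _ ≤ 2 * exp (-t / 2) := by gcongr; linarith

/-- Weighted AM–GM on `cosh t - s = 2 * sinh (t / 2) ^ 2 + (1 - s)`: the parameter `ε` trades the
singularity at `s = 1` against the one at `t = 0`. -/
lemma one_sub_exp_div_cosh_sub_le (hε : ε ∈ Icc 0 1) (hs : s < 1) (ht : 0 < t) :
    (1 - exp (-t)) / (2 * (cosh t - s)) ≤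
      2 ^ ε * (1 - s) ^ ((ε - 1) / 2) * t ^ (-ε) * exp (-t / 2) := by
  set S := sinh (t / 2) with hS
  have hS0 : t / 2 ≤ S := self_le_sinh_iff.2 (by positivity)
  have hSpos : 0 < S := by linarith
  have hs' : 0 < 1 - s := sub_pos.2 hs
  have hnum : 1 - exp (-t) = 2 * S * exp (-t / 2) := by
    rw [hS, sinh_eq, neg_div, mul_div_cancel₀ _ two_ne_zero, sub_mul, ← exp_add, ← exp_add,
      add_neg_cancel, exp_zero, ← neg_add, add_halves]
  have hden : cosh t - s = 2 * S ^ 2 + (1 - s) := by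
    have := cosh_two_mul (t / 2)
    rw [mul_div_cancel₀ _ two_ne_zero, cosh_sq'] at this
    linarith
  have hamgm : S ^ (1 + ε) * (1 - s) ^ ((1 - ε) / 2) ≤ cosh t - s := by
    have hmean := geom_mean_le_arith_mean2_weighted (w₁ := (1 + ε) / 2) (w₂ := (1 - ε) / 2)
      (by linarith [hε.1]) (by linarith [hε.2]) (sq_nonneg S) hs'.le (by ring)
    rw [← rpow_natCast_mul hSpos.le, Nat.cast_two, mul_div_cancel₀ _ two_ne_zero] at hmean
    rw [hden]
    nlinarith [hε.1, hε.2, sq_nonneg S]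
  calc (1 - exp (-t)) / (2 * (cosh t - s))
      = S * exp (-t / 2) / (cosh t - s) := by
        rw [hnum, mul_assoc, mul_div_mul_left _ _ two_ne_zero]
    _ ≤ S * exp (-t / 2) / (S ^ (1 + ε) * (1 - s) ^ ((1 - ε) / 2)) := by gcongr
    _ = S ^ (-ε) * (1 - s) ^ ((ε - 1) / 2) * exp (-t / 2) := by
        rw [rpow_add hSpos, rpow_one, rpow_neg hSpos.le, show (ε - 1) / 2 = -((1 - ε) / 2) by ring,
          rpow_neg hs'.le]
        field_simp
    _ ≤ (t / 2) ^ (-ε) * (1 - s) ^ ((ε - 1) / 2) * exp (-t / 2) := by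
        have := rpow_le_rpow_of_nonpos (half_pos ht) hS0 (neg_nonpos.2 hε.1)
        gcongr
    _ = 2 ^ ε * (1 - s) ^ ((ε - 1) / 2) * t ^ (-ε) * exp (-t / 2) := by
        rw [div_rpow ht.le two_pos.le, rpow_neg two_pos.le, div_inv_eq_mul]
        ring

lemma norm_rpow_mul_kernelIntegrand_le (α : ℝ) (hε : ε ∈ Icc 0 1) (hs : s ∈ Ico (-1) 1)
    (ht : 0 < t) :
    ‖t ^ (α - 1) * kernelIntegrand s t‖ ≤ 2 * (t ^ (α - 1) * exp (-t / 2)) +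
      (1 - s) ^ ((ε - 1) / 2) * (2 ^ ε * (t ^ (α - ε - 1) * exp (-t / 2))) := by
  have hpos := cosh_sub_pos hs.2 t
  have habs : |s - exp (-t)| ≤ (1 - s) + (1 - exp (-t)) := by
    have := exp_le_one_iff.2 (neg_nonpos.2 ht.le)
    rw [abs_le]
    constructor <;> linarith [hs.2]
  rw [norm_mul, norm_of_nonneg (rpow_nonneg ht.le _), norm_eq_abs, kernelIntegrand, abs_div,
    abs_of_pos (mul_pos two_pos hpos)]
  calc t ^ (α - 1) * (|s - exp (-t)| / (2 * (cosh t - s)))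
      ≤ t ^ (α - 1) * ((1 - s) / (2 * (cosh t - s)) +
          (1 - exp (-t)) / (2 * (cosh t - s))) := by
        rw [← add_div]
        gcongr
    _ ≤ t ^ (α - 1) * (2 * exp (-t / 2) +
          2 ^ ε * (1 - s) ^ ((ε - 1) / 2) * t ^ (-ε) * exp (-t / 2)) := by
        gcongr
        · exact one_sub_div_cosh_sub_le hs ht.le
        · exact one_sub_exp_div_cosh_sub_le hε hs.2 ht
    _ = _ := by
        rw [show α - ε - 1 = (α - 1) + -ε by ring, rpow_add ht]
        ring

lemma integrableOn_rpow_mul_exp_neg_half {a : ℝ} (ha : 0 < a) :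
    IntegrableOn (fun t : ℝ ↦ t ^ (a - 1) * exp (-t / 2)) (Ioi 0) := by
  refine (integrableOn_rpow_mul_exp_neg_mul_rpow (p := 1) (s := a - 1) (b := 1 / 2)
    (by linarith) one_pos one_half_pos).congr_fun (fun t _ ↦ ?_) measurableSet_Ioi
  simp only [rpow_one, neg_mul, one_div_mul_eq_div, neg_div]

lemma measurable_kernelIntegrand : Measurable fun z : ℝ × ℝ ↦ kernelIntegrand z.1 z.2 := by
  unfold kernelIntegrand
  fun_prop

lemma integrableOn_rpow_mul_kernelIntegrand (hα : 0 < α) (hs : s ∈ Ico (-1) 1) :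
    IntegrableOn (fun t ↦ t ^ (α - 1) * kernelIntegrand s t) (Ioi 0) := by
  obtain ⟨ε, hε0, hε⟩ := exists_between (lt_min hα one_pos)
  obtain ⟨hεα, hε1⟩ := lt_min_iff.1 hε
  have hmeas : Measurable fun t ↦ kernelIntegrand s t :=
    measurable_kernelIntegrand.comp measurable_prodMk_left
  refine Integrable.mono' (((integrableOn_rpow_mul_exp_neg_half hα).const_mul 2).add
    (((integrableOn_rpow_mul_exp_neg_half (sub_pos.2 hεα)).const_mul (2 ^ ε)).const_mul
      ((1 - s) ^ ((ε - 1) / 2)))) (by fun_prop) ?_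
  filter_upwards [ae_restrict_mem measurableSet_Ioi] with t ht
  exact norm_rpow_mul_kernelIntegrand_le α ⟨hε0.le, hε1.le⟩ hs ht

lemma kernelProfile_sub (hα : 0 < α) (hs₁ : s₁ ∈ Ico (-1) 1) (hs₂ : s₂ ∈ Ico (-1) 1) :
    kernelProfile α s₁ - kernelProfile α s₂ = 1 / (π * Real.Gamma α) *
      ∫ t in Ioi 0, t ^ (α - 1) * (kernelIntegrand s₁ t - kernelIntegrand s₂ t) := by
  simp only [kernelProfile, mul_sub (_ ^ (α - 1))]
  rw [integral_sub (integrableOn_rpow_mul_kernelIntegrand hα hs₁)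
    (integrableOn_rpow_mul_kernelIntegrand hα hs₂), mul_sub]

lemma integrableOn_rpow_mul_kernelIntegrand_sub (hα : 0 < α) (hs₁ : s₁ ∈ Ico (-1) 1)
    (hs₂ : s₂ ∈ Ico (-1) 1) :
    IntegrableOn (fun t ↦ t ^ (α - 1) * (kernelIntegrand s₁ t - kernelIntegrand s₂ t))
      (Ioi 0) := by
  simp only [mul_sub (_ ^ (α - 1))]
  exact (integrableOn_rpow_mul_kernelIntegrand hα hs₁).sub
    (integrableOn_rpow_mul_kernelIntegrand hα hs₂)

lemma rpow_mul_kernelIntegrand_sub_pos (α : ℝ) (h : s₂ < s₁) (hs₁ : s₁ < 1) (ht : 0 < t) :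
    0 < t ^ (α - 1) * (kernelIntegrand s₁ t - kernelIntegrand s₂ t) := by
  have := sinh_pos_iff.2 ht
  have := sub_pos.2 h
  have := cosh_sub_pos hs₁ t
  have := cosh_sub_pos (h.trans hs₁) t
  rw [kernelIntegrand_sub hs₁ (h.trans hs₁)]
  positivity

theorem kernelProfile_strictMonoOn (hα : 0 < α) : StrictMonoOn (kernelProfile α) (Ico (-1) 1) := by
  intro s₂ hs₂ s₁ hs₁ h
  have hpos : ∀ t ∈ Ioi (0 : ℝ), 0 <
      t ^ (α - 1) * (kernelIntegrand s₁ t - kernelIntegrand s₂ t) := fun t ht ↦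
    rpow_mul_kernelIntegrand_sub_pos α h hs₁.2 ht
  have hsupp : Ioi 0 ⊆ Function.support fun t ↦
      t ^ (α - 1) * (kernelIntegrand s₁ t - kernelIntegrand s₂ t) := fun t ht ↦
    (hpos t ht).ne'
  rw [← sub_pos, kernelProfile_sub hα hs₁ hs₂]
  refine mul_pos (one_div_pos.2 (mul_pos pi_pos (Gamma_pos_of_pos hα))) ?_
  rw [setIntegral_pos_iff_support_of_nonneg_ae
    (ae_restrict_of_forall_mem measurableSet_Ioi fun t ht ↦ (hpos t ht).le)
    (integrableOn_rpow_mul_kernelIntegrand_sub hα hs₁ hs₂),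
    inter_eq_right.2 hsupp, volume_Ioi]
  exact ENNReal.zero_lt_top

end Profile

section Scale

variable {h : ℝ}

lemma sq_le_cos_two_mul_sub_cos_three_mul (hh : 0 ≤ h) (h1 : h ≤ 1 / 4) :
    h ^ 2 ≤ cos (2 * h) - cos (3 * h) := by
  have hpi := pi_gt_three
  have hpi_sq : π ^ 2 ≤ 10 := by nlinarith [pi_lt_d2, pi_pos]
  have hsum : 2 / π * (5 * h / 2) ≤ sin (5 * h / 2) := mul_le_sin (by linarith) (by linarith)
  have hdiff : 2 / π * (h / 2) ≤ sin (h / 2) := mul_le_sin (by linarith) (by linarith)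
  have hsin : 0 ≤ sin (5 * h / 2) := le_trans (by positivity) hsum
  calc h ^ 2 ≤ 10 / π ^ 2 * h ^ 2 :=
        le_mul_of_one_le_left (sq_nonneg h) ((one_le_div (by positivity)).2 hpi_sq)
    _ = 2 * (2 / π * (5 * h / 2)) * (2 / π * (h / 2)) := by field_simp; ring
    _ ≤ 2 * sin (5 * h / 2) * sin (h / 2) := by
        have : 0 ≤ 2 * sin (5 * h / 2) := by positivity
        gcongr
    _ = cos (2 * h) - cos (3 * h) := by
        rw [cos_sub_cos, show (2 * h - 3 * h) / 2 = -(h / 2) by ring, sin_neg]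
        ring_nf

lemma cosh_two_mul_sub_cos_three_mul_le (hh : 0 ≤ h) (h1 : h ≤ 1 / 4) :
    cosh (2 * h) - cos (3 * h) ≤ 9 * h ^ 2 := by
  have hexp := abs_exp_sub_one_le (x := (2 * h) ^ 2 / 2)
    (by rw [abs_of_nonneg (by positivity)]; nlinarith)
  rw [abs_of_nonneg (by positivity : 0 ≤ (2 * h) ^ 2 / 2)] at hexp
  linarith [cosh_le_exp_half_sq (2 * h), le_of_abs_le hexp,
    one_sub_sq_div_two_le_cos (x := 3 * h), sq_nonneg h]

/-- For `t` comparable to `h`, the numerator `sinh t * (cos 2h - cos 3h)` is of order `h ^ 3` and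
the denominator of order `h ^ 4`. -/
lemma le_rpow_mul_kernelIntegrand_sub {α t : ℝ} (hα : 0 ≤ α) (hh : 0 < h) (h1 : h ≤ 1 / 4)
    (ht : t ∈ Icc h (2 * h)) :
    h ^ (α - 1) / (324 * h) ≤ t ^ (α - 1) *
      (kernelIntegrand (cos (2 * h)) t - kernelIntegrand (cos (3 * h)) t) := by
  have ht0 : 0 < t := hh.trans_le ht.1
  have hweight : h ^ (α - 1) / 2 ≤ t ^ (α - 1) := by
    rw [rpow_sub_one hh.ne', rpow_sub_one ht0.ne', div_div, mul_comm h]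
    have := rpow_le_rpow hh.le ht.1 hα
    gcongr
    exact ht.2
  have hsinh : h ≤ sinh t := ht.1.trans (self_le_sinh_iff.2 ht0.le)
  have hcos := sq_le_cos_two_mul_sub_cos_three_mul hh.le h1
  have hlt : cos (2 * h) < 1 :=
    cos_lt_one_of_mem_Ioc ⟨by linarith, by linarith [pi_gt_three]⟩
  have hden₁ := cosh_sub_pos hlt t
  have hle : cosh t - cos (2 * h) ≤ cosh t - cos (3 * h) := by nlinarith
  have hden₂ : cosh t - cos (3 * h) ≤ 9 * h ^ 2 := by
    have : cosh t ≤ cosh (2 * h) := cosh_le_cosh.2 (abs_le_abs_of_nonneg ht0.le ht.2)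
    linarith [cosh_two_mul_sub_cos_three_mul_le hh.le h1]
  rw [kernelIntegrand_sub hlt (by nlinarith)]
  calc h ^ (α - 1) / (324 * h)
      = h ^ (α - 1) / 2 * (h * h ^ 2 / (2 * (9 * h ^ 2) * (9 * h ^ 2))) := by field_simp; norm_num
    _ ≤ _ := by
        have hden₂_pos := hden₁.trans_le hle
        have := hle.trans hden₂
        have : 0 ≤ sinh t * (cos (2 * h) - cos (3 * h)) :=
          mul_nonneg (hh.le.trans hsinh) ((sq_nonneg h).trans hcos)
        gcongr

theorem rpow_le_kernelProfile_sub {α : ℝ} (hα : 0 < α) (hh : 0 < h) (h1 : h ≤ 1 / 4) :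
    1 / (π * Real.Gamma α) * (h ^ (α - 1) / 324) ≤
      kernelProfile α (cos (2 * h)) - kernelProfile α (cos (3 * h)) := by
  have : 0 < π * Real.Gamma α := mul_pos pi_pos (Gamma_pos_of_pos hα)
  have hlt : cos (3 * h) < cos (2 * h) := by
    have := sq_le_cos_two_mul_sub_cos_three_mul hh.le h1
    nlinarith
  have hlt' : cos (2 * h) < 1 :=
    cos_lt_one_of_mem_Ioc ⟨by linarith, by linarith [pi_gt_three]⟩
  have hs₁ : cos (2 * h) ∈ Ico (-1) 1 := ⟨neg_one_le_cos _, hlt'⟩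
  have hs₂ : cos (3 * h) ∈ Ico (-1) 1 := ⟨neg_one_le_cos _, hlt.trans hlt'⟩
  have hsub : Icc h (2 * h) ⊆ Ioi 0 := fun t ht ↦ hh.trans_le ht.1
  have hint := integrableOn_rpow_mul_kernelIntegrand_sub hα hs₁ hs₂
  rw [kernelProfile_sub hα hs₁ hs₂]
  gcongr
  calc h ^ (α - 1) / 324 = h ^ (α - 1) / (324 * h) * volume.real (Icc h (2 * h)) := by
        rw [volume_real_Icc_of_le (by linarith)]
        field_simp
        norm_num
    _ ≤ _ := setIntegral_ge_of_const_le_real measurableSet_Icc measure_Icc_lt_top.ne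
        (fun t ht ↦ le_rpow_mul_kernelIntegrand_sub hα.le hh h1 ht) (hint.mono_set hsub)
    _ ≤ _ := setIntegral_mono_set hint
        (ae_restrict_of_forall_mem measurableSet_Ioi fun t ht ↦
          (rpow_mul_kernelIntegrand_sub_pos α hlt hlt' ht).le) hsub.eventuallyLE

end Scale

section Kker

variable {α : ℝ}

lemma one_sub_cos_rpow_le {β x : ℝ} (hβ : β ≤ 0) (hx : x ∈ Ioc 0 π) :
    (1 - cos x) ^ (β / 2) ≤ (2 / π ^ 2) ^ (β / 2) * x ^ β := by
  have hcos := cos_le_one_sub_mul_cos_sq (x := x) (by rw [abs_of_pos hx.1]; exact hx.2)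
  have := pi_pos
  have hx0 := hx.1
  calc (1 - cos x) ^ (β / 2) ≤ (2 / π ^ 2 * x ^ 2) ^ (β / 2) :=
        rpow_le_rpow_of_nonpos (by positivity) (by linarith) (by linarith)
    _ = (2 / π ^ 2) ^ (β / 2) * x ^ β := by
        rw [mul_rpow (by positivity) (by positivity), ← rpow_natCast_mul hx.1.le, Nat.cast_two,
          mul_div_cancel₀ _ two_ne_zero]

lemma integrable_rpow_mul_kernelIntegrand_cos (hα : 0 < α) :
    Integrable (fun z : ℝ × ℝ ↦ z.2 ^ (α - 1) * kernelIntegrand (cos z.1) z.2)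
      ((volume.restrict (Ioc 0 π)).prod (volume.restrict (Ioi 0))) := by
  obtain ⟨ε, hε0, hε⟩ := exists_between (lt_min hα one_pos)
  obtain ⟨hεα, hε1⟩ := lt_min_iff.1 hε
  have hmeas : Measurable fun z : ℝ × ℝ ↦ kernelIntegrand (cos z.1) z.2 :=
    measurable_kernelIntegrand.comp (by fun_prop : Measurable fun z : ℝ × ℝ ↦ (cos z.1, z.2))
  have hrpow : IntegrableOn (fun x : ℝ ↦ x ^ (ε - 1)) (Ioc 0 π) :=
    (intervalIntegral.intervalIntegrable_rpow' (by linarith)).1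
  refine Integrable.mono'
    (((integrable_const (1 : ℝ)).mul_prod
        ((integrableOn_rpow_mul_exp_neg_half hα).const_mul 2)).add
      ((hrpow.const_mul ((2 / π ^ 2) ^ ((ε - 1) / 2))).mul_prod
        ((integrableOn_rpow_mul_exp_neg_half (sub_pos.2 hεα)).const_mul (2 ^ ε))))
    (by fun_prop) ?_
  rw [Measure.prod_restrict]
  filter_upwards [ae_restrict_mem (measurableSet_Ioc.prod measurableSet_Ioi)] with ⟨x, t⟩ ⟨hx, ht⟩
  have hs : cos x ∈ Ico (-1) 1 := ⟨neg_one_le_cos x, cos_lt_one_of_mem_Ioc hx⟩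
  refine (norm_rpow_mul_kernelIntegrand_le α ⟨hε0.le, hε1.le⟩ hs ht).trans ?_
  have ht0 : (0 : ℝ) < t := ht
  simp only [Pi.add_apply, one_mul]
  gcongr
  exact one_sub_cos_rpow_le (by linarith) hx

lemma Kker_periodic (α : ℝ) : Function.Periodic (Kker α) (2 * π) := fun x ↦
  Kker_eq_of_cos_eq α (cos_add_two_pi x)

lemma Kker_even (α : ℝ) : Function.Even (Kker α) := fun x ↦ Kker_eq_of_cos_eq α (cos_neg x)

lemma intervalIntegrable_Kker (hα : 0 < α) (a b : ℝ) :
    IntervalIntegrable (Kker α) volume a b := by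
  have hpos : IntervalIntegrable (Kker α) volume 0 π := by
    rw [intervalIntegrable_iff_integrableOn_Ioc_of_le pi_pos.le]
    refine IntegrableOn.congr_fun
      ((integrable_rpow_mul_kernelIntegrand_cos hα).integral_prod_left.const_mul
        (1 / (π * Real.Gamma α))) (fun x hx ↦ ?_) measurableSet_Ioc
    rw [Kker_of_cos_ne_one (cos_lt_one_of_mem_Ioc hx).ne, kernelProfile]
  have hneg : IntervalIntegrable (Kker α) volume (-π) 0 := by
    have := (IntervalIntegrable.iff_comp_neg (f := Kker α)).1 hpos
    simp only [Kker_even α _, neg_zero] at this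
    exact this.symm
  refine (Kker_periodic α).intervalIntegrable (t := -π) two_pi_pos.ne' ?_ a b
  rw [two_mul, neg_add_cancel_left]
  exact hneg.trans hpos

theorem exists_mul_rpow_le_Kker_sub (hα : 0 < α) :
    ∃ k > 0, ∀ h ∈ Ioc (0 : ℝ) (1 / 4), k * h ^ (α - 1) ≤ Kker α (2 * h) - Kker α (3 * h) := by
  refine ⟨1 / (π * Real.Gamma α) / 324, div_pos (one_div_pos.2 (mul_pos pi_pos
    (Gamma_pos_of_pos hα))) (by norm_num), fun h ⟨hh, h1⟩ ↦ ?_⟩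
  have hcos : ∀ x ∈ Ioc 0 1, cos x ≠ 1 := fun x hx ↦
    (cos_lt_one_of_mem_Ioc ⟨hx.1, hx.2.trans (by linarith [pi_gt_three])⟩).ne
  rw [Kker_of_cos_ne_one (hcos _ ⟨by linarith, by linarith⟩),
    Kker_of_cos_ne_one (hcos _ ⟨by linarith, by linarith⟩), div_mul_eq_mul_div, mul_div_assoc]
  exact rpow_le_kernelProfile_sub hα hh h1

theorem isUnimodalKernel_Kker (hα : 0 < α) : IsUnimodalKernel (Kker α) where
  even := Kker_even α
  periodic := Kker_periodic α
  intervalIntegrable := intervalIntegrable_Kker hα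
  lt_of_cos_lt x y hxy hy := by
    have hy' := (cos_le_one y).lt_of_ne hy
    rw [Kker_of_cos_ne_one hy, Kker_of_cos_ne_one (hxy.trans hy').ne]
    exact kernelProfile_strictMonoOn hα ⟨neg_one_le_cos x, hxy.trans hy'⟩
      ⟨neg_one_le_cos y, hy'⟩ hxy

end Kker

/-! ### Scaling iteration -/

section Scaling

variable {α κ δ r : ℝ} {u : ℝ → ℝ}

/-- Otherwise `u` increases by more than `(a - 1) * lam * X` while `u < lam * X`, which is faster
than `κ * X * (u' - u) ≤ u ^ 2` allows. -/
lemma mul_le_of_mul_sub_le_sq {lam a X u u' : ℝ} (hκ : 0 < κ) (hX : 0 < X) (hu : 0 ≤ u)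
    (hlam : lam ≤ κ * (a - 1)) (hu' : lam * (a * X) ≤ u') (hstep : κ * X * (u' - u) ≤ u ^ 2) :
    lam * X ≤ u := by
  by_contra! hlt
  have hgrowth : lam * (a - 1) * X < u' - u := by linarith
  have hlam0 : 0 < lam := pos_of_mul_pos_left (hu.trans_lt hlt) hX.le
  have hquad : κ * X * (lam * (a - 1) * X) < (lam * X) ^ 2 :=
    calc κ * X * (lam * (a - 1) * X) < κ * X * (u' - u) := by gcongr
      _ ≤ u ^ 2 := hstep
      _ < (lam * X) ^ 2 := by gcongr
  have : (lam * X ^ 2) * lam ≤ (lam * X ^ 2) * (κ * (a - 1)) := by gcongr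
  linarith

lemma mul_rpow_le_of_pow_mul_mem_Icc {lam : ℝ} (hκ : 0 < κ) (hr : 1 < r)
    (hpos : ∀ x ∈ Ioc 0 δ, 0 < u x) (hmono : MonotoneOn u (Ioc 0 δ))
    (hstep : ∀ x, 0 < x → r * x ≤ δ → κ * x ^ α * (u (r * x) - u x) ≤ u x ^ 2)
    (hα : 0 ≤ α) (hlam : 0 ≤ lam) (hbase : lam * δ ^ α ≤ u (δ / r)) (hrate : lam ≤ κ * (r ^ α - 1))
    (m : ℕ) {x : ℝ} (hx : 0 < x) (hmem : r ^ m * x ∈ Icc (δ / r) δ) : lam * x ^ α ≤ u x := by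
  have hr0 : 0 < r := one_pos.trans hr
  induction m generalizing x with
  | zero =>
    rw [pow_zero, one_mul] at hmem
    have hδ : 0 < δ := hx.trans_le hmem.2
    calc lam * x ^ α ≤ lam * δ ^ α := by gcongr; exact hmem.2
      _ ≤ u (δ / r) := hbase
      _ ≤ u x := hmono ⟨by positivity, div_le_self hδ.le hr.le⟩ ⟨hx, hmem.2⟩ hmem.1
  | succ m ih =>
    rw [pow_succ, mul_assoc] at hmem
    have hrx : 0 < r * x := by positivity
    have hrxδ : r * x ≤ δ := (le_mul_of_one_le_left hrx.le (one_le_pow₀ hr.le)).trans hmem.2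
    have hxδ : x ≤ δ := (le_mul_of_one_le_left hx.le hr.le).trans hrxδ
    refine mul_le_of_mul_sub_le_sq hκ (rpow_pos_of_pos hx α) (hpos x ⟨hx, hxδ⟩).le hrate ?_
      (hstep x hx hrxδ)
    rw [← mul_rpow hr0.le hx.le]
    exact ih hrx hmem

theorem exists_mul_rpow_le_of_scaling (hα : 0 < α) (hκ : 0 < κ) (hδ : 0 < δ) (hr : 1 < r)
    (hpos : ∀ x ∈ Ioc 0 δ, 0 < u x) (hmono : MonotoneOn u (Ioc 0 δ))
    (hstep : ∀ x, 0 < x → r * x ≤ δ → κ * x ^ α * (u (r * x) - u x) ≤ u x ^ 2) :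
    ∃ lam > 0, ∀ x ∈ Ioc 0 δ, lam * x ^ α ≤ u x := by
  have hr0 : 0 < r := one_pos.trans hr
  have hδα : 0 < δ ^ α := rpow_pos_of_pos hδ α
  have hbase : 0 < u (δ / r) := hpos _ ⟨by positivity, div_le_self hδ.le hr.le⟩
  have hlam : 0 < min (u (δ / r) / δ ^ α) (κ * (r ^ α - 1)) :=
    lt_min (div_pos hbase hδα) (mul_pos hκ (sub_pos.2 (one_lt_rpow hr hα)))
  refine ⟨_, hlam, fun x hx ↦ ?_⟩
  obtain ⟨m, hm, hm'⟩ := exists_nat_pow_near ((one_le_div hx.1).2 hx.2) hr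
  refine mul_rpow_le_of_pow_mul_mem_Icc hκ hr hpos hmono hstep hα.le hlam.le
    ((le_div_iff₀ hδα).1 (min_le_left _ _)) (min_le_right _ _) m hx.1
    ⟨?_, (le_div_iff₀ hx.1).1 hm⟩
  rw [div_lt_iff₀ hx.1, pow_succ, mul_right_comm] at hm'
  exact (div_le_iff₀ hr0).2 hm'.le

end Scaling

/-! ### Steady solutions near the crest -/

lemma exists_mul_rpow_mul_sub_le_differenceForm {α : ℝ} {f : ℝ → ℝ} (hα : 0 < α)
    (hf : CosMonotone f) (hcont : Continuous f) :
    ∃ κ > 0, ∀ x ∈ Ioc (0 : ℝ) (1 / 2),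
      κ * x ^ α * (f x - f (3 / 2 * x)) ≤ differenceForm (Kker α) f (x / 2) := by
  obtain ⟨k, hk, hker⟩ := exists_mul_rpow_le_Kker_sub hα
  refine ⟨k / 2 ^ α, by positivity, fun x ⟨hx, hx1⟩ ↦ ?_⟩
  have hx2 : 2 * (x / 2) = x := mul_div_cancel₀ x two_ne_zero
  have hx3 : 3 * (x / 2) = 3 / 2 * x := by ring
  have hf_anti : 0 ≤ f x - f (3 / 2 * x) := by
    refine sub_nonneg.2 (hf.antitoneOn ⟨hx.le, ?_⟩ ⟨?_, ?_⟩ ?_) <;> linarith [pi_gt_three]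
  have hker_x := hker (x / 2) ⟨half_pos hx, by linarith⟩
  have hform := (isUnimodalKernel_Kker hα).mul_sub_mul_sub_le_differenceForm hf hcont
    (half_pos hx) (by linarith [pi_gt_three])
  rw [hx2, hx3] at hker_x hform
  calc k / 2 ^ α * x ^ α * (f x - f (3 / 2 * x))
      = x / 2 * (k * (x / 2) ^ (α - 1) * (f x - f (3 / 2 * x))) := by
        rw [rpow_sub_one (half_pos hx).ne', div_rpow hx.le two_pos.le]
        field_simp
    _ ≤ x / 2 * ((Kker α x - Kker α (3 / 2 * x)) * (f x - f (3 / 2 * x))) := by gcongr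
    _ ≤ differenceForm (Kker α) f (x / 2) := hform

namespace IsSteadySolution

variable {α c : ℝ} {n φ : ℝ → ℝ}

lemma continuous (hφ : IsSteadySolution α c n φ) : Continuous φ := hφ.1

lemma periodic (hφ : IsSteadySolution α c n φ) : Function.Periodic φ (2 * π) := hφ.2.1

lemma differenceForm_eq (hφ : IsSteadySolution α c n φ) (hα : 0 < α) (heven : Function.Even φ)
    (h : ℝ) : differenceForm (Kker α) φ h =
      2 * (n (φ (2 * h)) - n (φ 0) - c * (φ (2 * h) - φ 0)) := by
  have heq : ∀ x, circleConv (Kker α) φ x =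
      c * φ x - n (φ x) + (1 / (2 * π)) * ∫ y in (-π)..π, n (φ y) := hφ.2.2.2
  rw [(isUnimodalKernel_Kker hα).differenceForm_eq hφ.continuous heven hφ.periodic, heq, heq]
  ring

lemma exists_ne_apply_zero (hφ : IsSteadySolution α c n φ) (hnt : ∃ x, φ x ≠ 0) :
    ∃ x, φ x ≠ φ 0 := by
  by_contra! hconst
  obtain ⟨x, hx⟩ := hnt
  have hmean : (π + π) * φ 0 = 0 := by
    simpa only [hconst, intervalIntegral.integral_const, sub_neg_eq_add, smul_eq_mul]
      using hφ.2.2.1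
  exact hx ((hconst x).trans ((mul_eq_zero.1 hmean).resolve_left (by positivity)))

lemma lt_apply_zero (hφ : IsSteadySolution α c n φ) (hα : 0 < α) (hmono : CosMonotone φ)
    (hnt : ∃ x, φ x ≠ 0) {x : ℝ} (hx : x ∈ Ioc 0 π) : φ x < φ 0 := by
  refine (hmono.le_apply_zero x).lt_of_ne fun heq ↦ ?_
  have hx2 : 2 * (x / 2) = x := mul_div_cancel₀ x two_ne_zero
  have hform := (isUnimodalKernel_Kker hα).differenceForm_pos hmono hφ.continuous
    (hφ.exists_ne_apply_zero hnt) (hx2.symm ▸ hx)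
  rw [hφ.differenceForm_eq hα hmono.even, hx2, heq] at hform
  linarith

lemma exists_mul_rpow_mul_sub_le_sq (hφ : IsSteadySolution α c n φ) (hα : 0 < α)
    (hmono : CosMonotone φ)
    (htangent : (fun v ↦ n v - n (φ 0) - c * (v - φ 0)) =O[𝓝[≤] φ 0] fun v ↦ (v - φ 0) ^ 2) :
    ∃ κ > 0, ∃ δ > 0, ∀ x ∈ Ioc 0 δ, κ * x ^ α * (φ x - φ (3 / 2 * x)) ≤ (φ 0 - φ x) ^ 2 := by
  obtain ⟨κ, hκ, hlower⟩ := exists_mul_rpow_mul_sub_le_differenceForm hα hmono hφ.continuous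
  obtain ⟨C, hC, hbound⟩ := htangent.exists_pos
  have hcrest : Tendsto φ (𝓝 0) (𝓝[≤] φ 0) :=
    tendsto_nhdsWithin_iff.2 ⟨hφ.continuous.tendsto 0, .of_forall hmono.le_apply_zero⟩
  obtain ⟨δ, hδ, hquad⟩ := Metric.eventually_nhds_iff_ball.1 (hcrest.eventually hbound.bound)
  refine ⟨κ / (2 * C), by positivity, min (δ / 2) (1 / 2), by positivity, fun x ⟨hx, hx_le⟩ ↦ ?_⟩
  obtain ⟨hxδ, hx1⟩ := le_min_iff.1 hx_le
  have hform := hφ.differenceForm_eq hα hmono.even (x / 2)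
  rw [mul_div_cancel₀ x two_ne_zero] at hform
  have hupper : n (φ x) - n (φ 0) - c * (φ x - φ 0) ≤ C * (φ x - φ 0) ^ 2 := by
    have := hquad x (by rw [Metric.mem_ball, dist_zero_right, norm_of_nonneg hx.le]; linarith)
    rw [norm_of_nonneg (sq_nonneg (φ x - φ 0))] at this
    exact (le_abs_self _).trans this
  rw [div_mul_eq_mul_div, div_mul_eq_mul_div, div_le_iff₀ (by positivity)]
  calc κ * x ^ α * (φ x - φ (3 / 2 * x)) ≤ differenceForm (Kker α) φ (x / 2) :=
        hlower x ⟨hx, hx1⟩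
    _ = 2 * (n (φ x) - n (φ 0) - c * (φ x - φ 0)) := hform
    _ ≤ 2 * (C * (φ x - φ 0) ^ 2) := by gcongr
    _ = (φ 0 - φ x) ^ 2 * (2 * C) := by ring

theorem exists_mul_rpow_le_sub {μ : ℝ} (hφ : IsSteadySolution α c n φ) (hα : 0 < α)
    (hmono : CosMonotone φ) (hnt : ∃ x, φ x ≠ 0) (hle : φ 0 ≤ μ)
    (htangent : (fun v ↦ n v - n μ - c * (v - μ)) =O[𝓝[≤] μ] fun v ↦ (v - μ) ^ 2) :
    ∃ δ > 0, ∃ lam > 0, ∀ x ∈ Ioc 0 δ, lam * x ^ α ≤ μ - φ x := by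
  rcases hle.lt_or_eq with hlt | rfl
  · refine ⟨1, one_pos, μ - φ 0, sub_pos.2 hlt, fun x hx ↦ ?_⟩
    calc (μ - φ 0) * x ^ α ≤ μ - φ 0 :=
          mul_le_of_le_one_right (sub_pos.2 hlt).le (rpow_le_one hx.1.le hx.2 hα.le)
      _ ≤ μ - φ x := sub_le_sub_left (hmono.le_apply_zero x) μ
  · obtain ⟨κ, hκ, δ, hδ, hstep⟩ := hφ.exists_mul_rpow_mul_sub_le_sq hα hmono htangent
    have hle_pi : min δ π ≤ π := min_le_right δ π
    refine ⟨min δ π, lt_min hδ pi_pos, exists_mul_rpow_le_of_scaling (r := 3 / 2) hα hκ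
      (lt_min hδ pi_pos) (by norm_num) (fun x hx ↦ ?_) (fun x hx y hy hxy ↦ ?_)
      fun x hx hxδ ↦ ?_⟩
    · exact sub_pos.2 (hφ.lt_apply_zero hα hmono hnt ⟨hx.1, hx.2.trans hle_pi⟩)
    · exact sub_le_sub_left (hmono.antitoneOn ⟨hx.1.le, hx.2.trans hle_pi⟩
        ⟨hy.1.le, hy.2.trans hle_pi⟩ hxy) _
    · rw [sub_sub_sub_cancel_left]
      exact hstep x ⟨hx, by linarith [min_le_left δ π]⟩

end IsSteadySolution

/-! ### The nonlinearities -/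

section Tangent

variable {𝕜 E : Type*} [NontriviallyNormedField 𝕜] [NormedAddCommGroup E] [NormedSpace 𝕜 E]

lemma isBigO_sub_sub_smul_deriv {f : 𝕜 → E} {a : 𝕜} (hf : AnalyticAt 𝕜 f a) :
    (fun x ↦ f x - f a - (x - a) • deriv f a) =O[𝓝 a] fun x ↦ ‖x - a‖ ^ 2 := by
  obtain ⟨q, hq⟩ := hf
  have hsub : Tendsto (fun x ↦ x - a) (𝓝 a) (𝓝 0) := tendsto_sub_nhds_zero_iff.2 tendsto_id
  refine ((hq.isBigO_sub_partialSum_pow 2).comp_tendsto hsub).congr_left fun x ↦ ?_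
  have hlin : q 1 (fun _ ↦ x - a) = (x - a) • deriv f a := by
    rw [q.apply_eq_pow_smul_coeff, pow_one, hq.deriv]
    rfl
  simp only [Function.comp_apply, add_sub_cancel, FormalMultilinearSeries.partialSum,
    Finset.sum_range_succ, Finset.sum_range_zero, zero_add, hq.coeff_zero, hlin, sub_sub]

end Tangent

/-- The height `μ` of the highest wave: the positive solution of `n'(μ) = c`. -/
noncomputable def crestHeight (p c : ℝ) : ℝ := (c / p) ^ (1 / (p - 1))

section Nonlinearity

variable {p c v : ℝ}

lemma nAbs_of_pos (hv : 0 < v) : nAbs p v = v ^ p := by rw [nAbs, abs_of_pos hv]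

lemma nSgn_of_pos (hv : 0 < v) : nSgn p v = v ^ p := by
  rw [nSgn, abs_of_pos hv, rpow_sub_one hv.ne', mul_div_cancel₀ _ hv.ne']

lemma nAbs'_of_pos (hv : 0 < v) : nAbs' p v = p * v ^ (p - 1) := by
  rw [nAbs', abs_of_pos hv, mul_assoc, show p - 1 = 1 + (p - 2) by ring, rpow_add hv, rpow_one]

lemma nSgn'_of_pos (hv : 0 < v) : nSgn' p v = p * v ^ (p - 1) := by rw [nSgn', abs_of_pos hv]

lemma crestHeight_pos (hp : 0 < p) (hc : 0 < c) : 0 < crestHeight p c :=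
  rpow_pos_of_pos (div_pos hc hp) _

lemma crestHeight_rpow (hp : 1 < p) (hc : 0 ≤ c) : crestHeight p c ^ (p - 1) = c / p := by
  rw [crestHeight, one_div]
  exact rpow_inv_rpow (by positivity) (sub_pos.2 hp).ne'

lemma le_crestHeight (hp : 1 < p) (hc : 0 < c) (h : 0 < v → p * v ^ (p - 1) ≤ c) :
    v ≤ crestHeight p c := by
  have hp0 : 0 < p := one_pos.trans hp
  rcases le_or_gt v 0 with hv | hv
  · exact hv.trans (crestHeight_pos hp0 hc).le
  · rw [← rpow_le_rpow_iff hv.le (crestHeight_pos hp0 hc).le (sub_pos.2 hp),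
      crestHeight_rpow hp hc.le, le_div_iff₀' hp0]
    exact h hv

lemma isBigO_rpow_sub_tangent (p : ℝ) {μ : ℝ} (hμ : 0 < μ) :
    (fun v ↦ v ^ p - μ ^ p - p * μ ^ (p - 1) * (v - μ)) =O[𝓝 μ] fun v ↦ (v - μ) ^ 2 := by
  have hf : AnalyticAt ℝ (fun v : ℝ ↦ v ^ p) μ := (contDiffAt_rpow_const_of_ne hμ.ne').analyticAt
  simpa only [Real.deriv_rpow_const, smul_eq_mul, norm_eq_abs, sq_abs, mul_comm (_ - μ)]
    using isBigO_sub_sub_smul_deriv hf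

lemma isBigO_sub_tangent_crestHeight {n : ℝ → ℝ} (hp : 1 < p) (hc : 0 < c)
    (hn : ∀ v, 0 < v → n v = v ^ p) :
    (fun v ↦ n v - n (crestHeight p c) - c * (v - crestHeight p c))
      =O[𝓝 (crestHeight p c)] fun v ↦ (v - crestHeight p c) ^ 2 := by
  have hp0 : 0 < p := one_pos.trans hp
  have hμ := crestHeight_pos hp0 hc
  have hslope : p * crestHeight p c ^ (p - 1) = c := by
    rw [crestHeight_rpow hp hc.le, mul_div_cancel₀ _ hp0.ne']
  refine (isBigO_rpow_sub_tangent p hμ).congr' ?_ .rfl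
  filter_upwards [lt_mem_nhds hμ] with v hv
  rw [hn v hv, hn _ hμ, hslope]

end Nonlinearity

theorem statement13_general {α c μ : ℝ} (hα : 0 < α) {n φ : ℝ → ℝ}
    (hφ : IsSteadySolution α c n φ) (hnt : ∃ x, φ x ≠ 0) (heven : Function.Even φ)
    (hmono : MonotoneOn φ (Ioo (-π) 0)) (hle : φ 0 ≤ μ)
    (htangent : (fun v ↦ n v - n μ - c * (v - μ)) =O[𝓝[≤] μ] fun v ↦ (v - μ) ^ 2) :
    ∃ δ > 0, ∃ lam > 0, ∀ x, |x| ≤ δ → lam * |x| ^ α ≤ μ - φ x := by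
  have hcos : CosMonotone φ := .of_monotoneOn hφ.continuous heven hφ.periodic hmono
  obtain ⟨δ, hδ, lam, hlam, h⟩ := hφ.exists_mul_rpow_le_sub hα hcos hnt hle htangent
  refine ⟨δ, hδ, lam, hlam, fun x hx ↦ ?_⟩
  have hφ_abs : φ |x| = φ x := hcos.eq_of_cos_eq (cos_abs x)
  rcases (abs_nonneg x).eq_or_lt with h0 | h0
  · rw [← hφ_abs, ← h0, zero_rpow hα.ne', mul_zero, sub_nonneg]
    exact hle
  · rw [← hφ_abs]
    exact h _ ⟨h0, hx⟩

/-- One-sided `α`-Hölder lower bound at the crest: for an even,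
nontrivial steady solution increasing on `(−π,0)` with `n′(φ) ≤ c` everywhere,
one has `μ − φ(x) ≥ λ·|x|^α` near `0`, where `μ = (c/p)^{1/(p−1)}`. -/
theorem statement13 (α p c : ℝ) (hα : α ∈ Set.Ioo (0:ℝ) 1) (hp : 1 < p) (hc : 0 < c)
    (n n' : ℝ → ℝ)
    (hn : (n = nAbs p ∧ n' = nAbs' p) ∨ (n = nSgn p ∧ n' = nSgn' p))
    (φ : ℝ → ℝ) (hφ : IsSteadySolution α c n φ)
    (hnt : ∃ x, φ x ≠ 0) (heven : ∀ x, φ (-x) = φ x)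
    (hmono : MonotoneOn φ (Set.Ioo (-π) 0))
    (hle : ∀ x : ℝ, n' (φ x) ≤ c) :
    ∃ δ > 0, ∃ lam > 0, ∀ x : ℝ, |x| ≤ δ →
      lam * |x| ^ α ≤ (c / p) ^ (1 / (p - 1)) - φ x := by
  have hpow : ∀ v, 0 < v → n v = v ^ p ∧ n' v = p * v ^ (p - 1) := by
    rcases hn with ⟨rfl, rfl⟩ | ⟨rfl, rfl⟩
    · exact fun v hv ↦ ⟨nAbs_of_pos hv, nAbs'_of_pos hv⟩
    · exact fun v hv ↦ ⟨nSgn_of_pos hv, nSgn'_of_pos hv⟩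
  exact statement13_general hα.1 hφ hnt heven hmono
    (le_crestHeight hp hc fun hv ↦ (hpow _ hv).2 ▸ hle 0)
    ((isBigO_sub_tangent_crestHeight hp hc fun v hv ↦ (hpow v hv).1).mono nhdsWithin_le_nhds)
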